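/- arXiv:2302.08925 — 4 statements merged into one kernel-verified Lean document; each statement's English description precedes it below -/
import Mathlib

section
/- Fix common angle data φ, ψ : {1,…,m} → ℝ with φ_0 = 0, η_i = ψ_i − φ_{i−1} ∈ (−π/2,π/2), θ_i = φ_i − ψ_i ∈ (−π/2,π/2), C_0 = 1, C_i = ∏_{α≤i} cos η_α / cos θ_α. Let σ(t) and σ'(t) be the deformed T-hedra given by the formulas of Theorem 3.1 from this angle data and from data (f, g, z) and (f', g', z') respectively, where z_0 = z'_0 = 0, g_α ≠ 0, g'_α ≠ 0, z_β ≠ z_{β−1}, and for every 1 ≤ β ≤ n there exists λ_β > 0 with f'_β = λ_β f_β and z'_β − z'_{β−1} = λ_β (z_β − z_{β−1}). Then for every t admissible for both: (a) for all 0 ≤ i ≤ m and 1 ≤ j ≤ n, σ'_{ij}(t) − σ'_{i,j−1}(t) = λ_j · ( σ_{ij}(t) − σ_{i,j−1}(t) ); (b) for all 1 ≤ i ≤ m and 0 ≤ j ≤ n, both σ_{ij}(t) − σ_{i−1,j}(t) and σ'_{ij}(t) − σ'_{i−1,j}(t) are scalar multiples of the vector (−sin ψ_i(t), cos ψ_i(t),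 0). In particular all corresponding edges of σ(t) and σ'(t) are parallel for all t. -/
open Real Finset

/-- A vector in Euclidean space `ℝ³` given by its three coordinates. -/
noncomputable def e3 (x y z : ℝ) : EuclideanSpace ℝ (Fin 3) := !₂[x, y, z]

/-!
In the orthonormal frame `(cos ψ_i, sin ψ_i)`, `(-sin ψ_i, cos ψ_i)`, the trajectory edge
`σ_{ij} - σ_{i-1,j}` has components `F_j (C_i cos θ_i - C_{i-1} cos η_i)` and
`g_i + F_j (C_i sin θ_i + C_{i-1} sin η_i)`, and the recursion for `C` makes the first one vanish.
The deformation replaces each pair `(C cos a, C sin a)` by `(√((C cos a)² + t), C sin a)`, so the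
first component stays zero and the second does not change. Along a profile, the deformed height
increment `h(Δ, f) = sign Δ √(Δ² - t f²)` satisfies `h(r Δ, r f) = r h(Δ, f)` for every real `r`.
-/

theorem e3_sub_e3 (x y z x' y' z' : ℝ) :
    e3 x y z - e3 x' y' z' = e3 (x - x') (y - y') (z - z') := by
  ext k
  fin_cases k <;> simp [e3]

theorem smul_e3 (r x y z : ℝ) : r • e3 x y z = e3 (r * x) (r * y) (r * z) := by
  ext k
  fin_cases k <;> simp [e3]

section Vertex

/-- The vertex `σ_{ij}` of the T-hedron whose `i`-th profile lies in a vertical plane at angle `φ i`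
and is scaled horizontally by `C i`, whose trajectory edges have direction `(-sin ψ_i, cos ψ_i, 0)`
and offsets `g i`, and whose profile has abscissae `F` and heights `z`. As in the paper, `g` and `ψ`
are indexed from `1`. -/
noncomputable def tHedronVertex (φ ψ C g F z : ℕ → ℝ) (i j : ℕ) : EuclideanSpace ℝ (Fin 3) :=
  e3 ((∑ α ∈ Icc 1 i, g α * (-(sin (ψ α)))) + C i * F j * cos (φ i))
    ((∑ α ∈ Icc 1 i, g α * cos (ψ α)) + C i * F j * sin (φ i))
    (z j)

variable {φ ψ C g F z : ℕ → ℝ} {i : ℕ}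

theorem tHedronVertex_profile_sub_eq_smul {g' F' z' : ℕ → ℝ} {r : ℝ} {j k : ℕ}
    (hF : F' j - F' k = r * (F j - F k)) (hz : z' j - z' k = r * (z j - z k)) :
    tHedronVertex φ ψ C g' F' z' i j - tHedronVertex φ ψ C g' F' z' i k =
      r • (tHedronVertex φ ψ C g F z i j - tHedronVertex φ ψ C g F z i k) := by
  simp only [tHedronVertex, e3_sub_e3, smul_e3]
  congr 1
  · linear_combination C i * cos (φ i) * hF
  · linear_combination C i * sin (φ i) * hF

theorem tHedronVertex_succ_sub
    (h : C (i + 1) * cos (φ (i + 1) - ψ (i + 1)) = C i * cos (ψ (i + 1) - φ i)) (j : ℕ) :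
    tHedronVertex φ ψ C g F z (i + 1) j - tHedronVertex φ ψ C g F z i j =
      (g (i + 1) +
        F j * (C (i + 1) * sin (φ (i + 1) - ψ (i + 1)) + C i * sin (ψ (i + 1) - φ i))) •
        e3 (-(sin (ψ (i + 1)))) (cos (ψ (i + 1))) 0 := by
  obtain ⟨θ, hθ⟩ : ∃ θ, φ (i + 1) = ψ (i + 1) + θ := ⟨_, (add_sub_cancel _ _).symm⟩
  obtain ⟨η, hη⟩ : ∃ η, φ i = ψ (i + 1) - η := ⟨_, (sub_sub_cancel _ _).symm⟩
  simp only [hθ, hη, add_sub_cancel_left, sub_sub_cancel] at h ⊢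
  simp only [tHedronVertex, e3_sub_e3, smul_e3, sum_Icc_succ_top (Nat.le_add_left 1 i), hθ, hη,
    cos_add, sin_add, cos_sub, sin_sub]
  congr 1
  · linear_combination F j * cos (ψ (i + 1)) * h
  · linear_combination F j * sin (ψ (i + 1)) * h
  · ring

end Vertex

/-- The angle `η_i(t)` or `θ_i(t)` of the deformed T-hedron: the angle in `[-π/2, π/2]` which,
at scale `r`, has the same opposite leg `c * sin a` as the angle `a` at scale `c`. It has this
property only if `|c * sin a| ≤ r`, because `arcsin` is truncated outside `[-1, 1]`. -/
noncomputable def rescaledAngle (c r a : ℝ) : ℝ := arcsin (c * sin a / r)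

theorem mul_sin_rescaledAngle {c r a : ℝ} (hr : 0 < r) (h : |c * sin a| ≤ r) :
    r * sin (rescaledAngle c r a) = c * sin a := by
  have hquot : |c * sin a / r| ≤ 1 := by
    rwa [abs_div, abs_of_pos hr, div_le_one hr]
  rw [rescaledAngle, sin_arcsin (neg_le_of_abs_le hquot) (le_of_abs_le hquot),
    mul_div_cancel₀ _ hr.ne']

theorem mul_cos_rescaledAngle {r : ℝ} (hr : 0 < r) (c a : ℝ) :
    r * cos (rescaledAngle c r a) = √(r ^ 2 - (c * sin a) ^ 2) := by
  have hfactor : r ^ 2 - (c * sin a) ^ 2 = r ^ 2 * (1 - (c * sin a / r) ^ 2) := by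
    field_simp
  rw [rescaledAngle, cos_arcsin, hfactor, sqrt_mul (sq_nonneg r), sqrt_sq hr.le]

theorem sqrt_mul_cos_rescaledAngle {c t : ℝ} (h : 0 < c ^ 2 + t) (a : ℝ) :
    √(c ^ 2 + t) * cos (rescaledAngle c √(c ^ 2 + t) a) = √((c * cos a) ^ 2 + t) := by
  rw [mul_cos_rescaledAngle (sqrt_pos.2 h), sq_sqrt h.le]
  congr 1
  linear_combination -c ^ 2 * sin_sq_add_cos_sq a

theorem sqrt_mul_sin_rescaledAngle {c t a : ℝ} (h : 0 < c ^ 2 + t)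
    (ha : c ^ 2 * sin a ^ 2 ≤ c ^ 2 + t) :
    √(c ^ 2 + t) * sin (rescaledAngle c √(c ^ 2 + t) a) = c * sin a :=
  mul_sin_rescaledAngle (sqrt_pos.2 h) (abs_le_sqrt (by rwa [mul_pow]))

/-- The height increment `z_β(t) - z_{β-1}(t)` of the deformed T-hedron over a profile edge with
height increment `Δ` and horizontal increment `f`. -/
noncomputable def deformedRise (t Δ f : ℝ) : ℝ := Real.sign Δ * √(Δ ^ 2 - t * f ^ 2)

theorem sign_mul_mul_abs (r x : ℝ) : Real.sign (r * x) * |r| = r * Real.sign x := by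
  rcases lt_trichotomy r 0 with hr | rfl | hr <;> rcases lt_trichotomy x 0 with hx | rfl | hx <;>
    simp [Real.sign_of_pos, Real.sign_of_neg, abs_of_pos, abs_of_neg, mul_pos_of_neg_of_neg,
      mul_neg_of_pos_of_neg, mul_neg_of_neg_of_pos, *]

theorem deformedRise_mul_mul (t r Δ f : ℝ) :
    deformedRise t (r * Δ) (r * f) = r * deformedRise t Δ f := by
  have hfactor : (r * Δ) ^ 2 - t * (r * f) ^ 2 = r ^ 2 * (Δ ^ 2 - t * f ^ 2) := by ring
  rw [deformedRise, deformedRise, hfactor, sqrt_mul (sq_nonneg r), sqrt_sq_eq_abs, ← mul_assoc,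
    sign_mul_mul_abs, mul_assoc]

/-- The deformation parameter `t` is admissible for the T-hedron with `m` trajectory edges,
`n` profile edges, scales `C`, angles `η`, `θ` and profile data `f`, `z`: all square roots and
arcsines of Theorem 3.1 have their arguments in the natural domain. -/
structure IsAdmissible (m n : ℕ) (C η θ f z : ℕ → ℝ) (t : ℝ) : Prop where
  scale_pos : ∀ i ≤ m, 0 < C i ^ 2 + t
  sin_η_le : ∀ i ∈ Icc 1 m, C (i - 1) ^ 2 * sin (η i) ^ 2 ≤ C (i - 1) ^ 2 + t
  sin_θ_le : ∀ i ∈ Icc 1 m, C i ^ 2 * sin (θ i) ^ 2 ≤ C i ^ 2 + t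
  width_le : ∀ β ∈ Icc 1 n, t * f β ^ 2 ≤ (z β - z (β - 1)) ^ 2

theorem prod_Icc_one_div_succ_mul {K : Type*} [CommGroupWithZero K] (a : ℕ → K) {b : ℕ → K}
    {i : ℕ} (h : b (i + 1) ≠ 0) :
    (∏ α ∈ Icc 1 (i + 1), a α / b α) * b (i + 1) = (∏ α ∈ Icc 1 i, a α / b α) * a (i + 1) := by
  rw [prod_Icc_succ_top (Nat.le_add_left 1 i), mul_assoc, div_mul_cancel₀ _ h]

theorem tHedronVertex_deformed_succ_sub {C η θ φt ψt Ct g F z : ℕ → ℝ} {i : ℕ} {t : ℝ}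
    (hcos : C (i + 1) * cos (θ (i + 1)) = C i * cos (η (i + 1)))
    (hpos : 0 < C i ^ 2 + t) (hpos' : 0 < C (i + 1) ^ 2 + t)
    (hsin : C i ^ 2 * sin (η (i + 1)) ^ 2 ≤ C i ^ 2 + t)
    (hsin' : C (i + 1) ^ 2 * sin (θ (i + 1)) ^ 2 ≤ C (i + 1) ^ 2 + t)
    (hCt : ∀ k, Ct k = √(C k ^ 2 + t))
    (hη : ψt (i + 1) - φt i = rescaledAngle (C i) (Ct i) (η (i + 1)))
    (hθ : φt (i + 1) - ψt (i + 1) = rescaledAngle (C (i + 1)) (Ct (i + 1)) (θ (i + 1))) (j : ℕ) :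
    tHedronVertex φt ψt Ct g F z (i + 1) j - tHedronVertex φt ψt Ct g F z i j =
      (g (i + 1) + F j * (C (i + 1) * sin (θ (i + 1)) + C i * sin (η (i + 1)))) •
        e3 (-(sin (ψt (i + 1)))) (cos (ψt (i + 1))) 0 := by
  have hcos_t :
      Ct (i + 1) * cos (φt (i + 1) - ψt (i + 1)) = Ct i * cos (ψt (i + 1) - φt i) := by
    rw [hη, hθ, hCt, hCt, sqrt_mul_cos_rescaledAngle hpos, sqrt_mul_cos_rescaledAngle hpos', hcos]
  rw [tHedronVertex_succ_sub hcos_t, hη, hθ, hCt, hCt, sqrt_mul_sin_rescaledAngle hpos hsin,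
    sqrt_mul_sin_rescaledAngle hpos' hsin']

theorem stmt_8_general {m n : ℕ} {η θ C : ℕ → ℝ}
    (hθ : ∀ i ∈ Icc 1 m, cos (θ i) ≠ 0)
    (hC : ∀ i, C i = ∏ α ∈ Icc 1 i, (cos (η α) / cos (θ α)))
    {f g z f' g' z' F F' : ℕ → ℝ}
    (hF : ∀ j, F j = ∑ β ∈ Icc 1 j, f β)
    (hF' : ∀ j, F' j = ∑ β ∈ Icc 1 j, f' β)
    {lam : ℕ → ℝ}
    (hlam : ∀ β ∈ Icc 1 n, f' β = lam β * f β ∧ z' β - z' (β - 1) = lam β * (z β - z (β - 1)))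
    {t : ℝ} (ht : IsAdmissible m n C η θ f z t)
    {Ct ηt θt φt ψt zt z't : ℕ → ℝ}
    (hCt : ∀ i, Ct i = √(C i ^ 2 + t))
    (hηt : ∀ i ∈ Icc 1 m, ηt i = rescaledAngle (C (i - 1)) (Ct (i - 1)) (η i))
    (hθt : ∀ i ∈ Icc 1 m, θt i = rescaledAngle (C i) (Ct i) (θ i))
    (hφt : ∀ i, φt i = ∑ α ∈ Icc 1 i, (ηt α + θt α))
    (hψt : ∀ i ∈ Icc 1 m, ψt i = φt (i - 1) + ηt i)
    (hzt : ∀ j, zt j = ∑ β ∈ Icc 1 j, deformedRise t (z β - z (β - 1)) (f β))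
    (hz't : ∀ j, z't j = ∑ β ∈ Icc 1 j, deformedRise t (z' β - z' (β - 1)) (f' β))
    {σ σ' : ℕ → ℕ → EuclideanSpace ℝ (Fin 3)}
    (hσ : ∀ i j, σ i j = tHedronVertex φt ψt Ct g F zt i j)
    (hσ' : ∀ i j, σ' i j = tHedronVertex φt ψt Ct g' F' z't i j) :
    (∀ i, ∀ j ∈ Icc 1 n, σ' i j - σ' i (j - 1) = lam j • (σ i j - σ i (j - 1))) ∧
    (∀ i ∈ Icc 1 m, ∀ j,
      σ i j - σ (i - 1) j = (g i + F j * (C i * sin (θ i) + C (i - 1) * sin (η i))) •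
        e3 (-(sin (ψt i))) (cos (ψt i)) 0 ∧
      σ' i j - σ' (i - 1) j = (g' i + F' j * (C i * sin (θ i) + C (i - 1) * sin (η i))) •
        e3 (-(sin (ψt i))) (cos (ψt i)) 0) := by
  simp only [hσ, hσ']
  refine ⟨fun i j hj => ?profile, fun i hi j => ?trajectory⟩
  case profile =>
    obtain ⟨hf, hz⟩ := hlam j hj
    obtain ⟨k, rfl⟩ := Nat.exists_eq_add_of_le' (mem_Icc.1 hj).1
    rw [Nat.add_sub_cancel] at hz ⊢
    apply tHedronVertex_profile_sub_eq_smul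
    · simp only [hF, hF', sum_Icc_succ_top (Nat.le_add_left 1 k), add_sub_cancel_left, hf]
    · simp only [hzt, hz't, sum_Icc_succ_top (Nat.le_add_left 1 k), add_sub_cancel_left,
        Nat.add_sub_cancel, hf, hz, deformedRise_mul_mul]
  case trajectory =>
    have him := (mem_Icc.1 hi).2
    obtain ⟨k, rfl⟩ := Nat.exists_eq_add_of_le' (mem_Icc.1 hi).1
    have hcos : C (k + 1) * cos (θ (k + 1)) = C k * cos (η (k + 1)) := by
      rw [hC, hC, prod_Icc_one_div_succ_mul (fun α => cos (η α)) (hθ _ hi)]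
    have hψ_sub : ψt (k + 1) - φt k = ηt (k + 1) := by
      rw [hψt _ hi, Nat.add_sub_cancel, add_sub_cancel_left]
    have hφ_sub : φt (k + 1) - ψt (k + 1) = θt (k + 1) := by
      rw [hψt _ hi, Nat.add_sub_cancel, hφt, hφt, sum_Icc_succ_top (Nat.le_add_left 1 k)]
      ring
    have edge (g F z : ℕ → ℝ) :=
      tHedronVertex_deformed_succ_sub (g := g) (F := F) (z := z) hcos
        (ht.scale_pos k (Nat.le_of_succ_le him)) (ht.scale_pos _ him) (ht.sin_η_le _ hi)
        (ht.sin_θ_le _ hi) hCt (hψ_sub.trans (hηt _ hi)) (hφ_sub.trans (hθt _ hi)) j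
    exact ⟨edge g F zt, edge g' F' z't⟩

/-- **Theorem 3.8 (discrete version).** Two parallel T-hedra (same angle data `φ, ψ`, profile
data related by `f'_β = λ_β f_β`, `Δ_β z' = λ_β Δ_β z` with `λ_β > 0`) remain parallel during
their isometric deformations of Theorem 3.1: corresponding profile edges stay positively
proportional and corresponding trajectory edges stay parallel to `(−sin ψ_i(t), cos ψ_i(t), 0)`. -/
theorem stmt_8 (m n : ℕ) (hm : 1 ≤ m) (hn : 1 ≤ n)
    (φ ψ η θ C : ℕ → ℝ)
    (hφ0 : φ 0 = 0)
    (hη : ∀ i ∈ Icc 1 m, η i = ψ i - φ (i - 1))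
    (hθ : ∀ i ∈ Icc 1 m, θ i = φ i - ψ i)
    (hηr : ∀ i ∈ Icc 1 m, η i ∈ Set.Ioo (-(π / 2)) (π / 2))
    (hθr : ∀ i ∈ Icc 1 m, θ i ∈ Set.Ioo (-(π / 2)) (π / 2))
    (hC : ∀ i, C i = ∏ α ∈ Icc 1 i, (cos (η α) / cos (θ α)))
    -- the two data sets (f, g, z) and (f', g', z')
    (f g z f' g' z' : ℕ → ℝ) (F F' : ℕ → ℝ)
    (hg : ∀ α ∈ Icc 1 m, g α ≠ 0) (hg' : ∀ α ∈ Icc 1 m, g' α ≠ 0)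
    (hz0 : z 0 = 0) (hz'0 : z' 0 = 0)
    (hzne : ∀ β ∈ Icc 1 n, z β ≠ z (β - 1))
    (hF : ∀ j, F j = ∑ β ∈ Icc 1 j, f β)
    (hF' : ∀ j, F' j = ∑ β ∈ Icc 1 j, f' β)
    -- the parallelity relation between the two data sets
    (lam : ℕ → ℝ)
    (hlam : ∀ β ∈ Icc 1 n, 0 < lam β ∧ f' β = lam β * f β ∧
        z' β - z' (β - 1) = lam β * (z β - z (β - 1)))
    -- the deformation data of Theorem 3.1 (angle part is common to both T-hedra)
    (Ct ηt θt φt ψt zt z't : ℝ → ℕ → ℝ)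
    (hCt : ∀ s i, Ct s i = Real.sqrt (C i ^ 2 + s))
    (hηt : ∀ s, ∀ i ∈ Icc 1 m, ηt s i = arcsin (C (i - 1) * sin (η i) / Ct s (i - 1)))
    (hθt : ∀ s, ∀ i ∈ Icc 1 m, θt s i = arcsin (C i * sin (θ i) / Ct s i))
    (hφt : ∀ s i, φt s i = ∑ α ∈ Icc 1 i, (ηt s α + θt s α))
    (hψt : ∀ s, ∀ i ∈ Icc 1 m, ψt s i = φt s (i - 1) + ηt s i)
    (hzt : ∀ s j, zt s j = ∑ β ∈ Icc 1 j, Real.sign (z β - z (β - 1)) *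
        Real.sqrt ((z β - z (β - 1)) ^ 2 - s * f β ^ 2))
    (hz't : ∀ s j, z't s j = ∑ β ∈ Icc 1 j, Real.sign (z' β - z' (β - 1)) *
        Real.sqrt ((z' β - z' (β - 1)) ^ 2 - s * f' β ^ 2))
    (σ σ' : ℝ → ℕ → ℕ → EuclideanSpace ℝ (Fin 3))
    (hσ : ∀ s i j, σ s i j =
        e3 ((∑ α ∈ Icc 1 i, g α * (-(sin (ψt s α)))) + Ct s i * F j * cos (φt s i))
           ((∑ α ∈ Icc 1 i, g α * cos (ψt s α)) + Ct s i * F j * sin (φt s i))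
           (zt s j))
    (hσ' : ∀ s i j, σ' s i j =
        e3 ((∑ α ∈ Icc 1 i, g' α * (-(sin (ψt s α)))) + Ct s i * F' j * cos (φt s i))
           ((∑ α ∈ Icc 1 i, g' α * cos (ψt s α)) + Ct s i * F' j * sin (φt s i))
           (z't s j))
    -- a deformation parameter admissible for both T-hedra
    (t : ℝ)
    (htC : ∀ i ≤ m, 0 < C i ^ 2 + t)
    (htη : ∀ i ∈ Icc 1 m, C (i - 1) ^ 2 * sin (η i) ^ 2 ≤ C (i - 1) ^ 2 + t)
    (htθ : ∀ i ∈ Icc 1 m, C i ^ 2 * sin (θ i) ^ 2 ≤ C i ^ 2 + t)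
    (htz : ∀ β ∈ Icc 1 n, t * f β ^ 2 ≤ (z β - z (β - 1)) ^ 2)
    (htz' : ∀ β ∈ Icc 1 n, t * f' β ^ 2 ≤ (z' β - z' (β - 1)) ^ 2) :
    (∀ i ≤ m, ∀ j ∈ Icc 1 n,
      σ' t i j - σ' t i (j - 1) = lam j • (σ t i j - σ t i (j - 1))) ∧
    (∀ i ∈ Icc 1 m, ∀ j ≤ n,
      (∃ c : ℝ, σ t i j - σ t (i - 1) j = c • e3 (-(sin (ψt t i))) (cos (ψt t i)) 0) ∧
      (∃ c' : ℝ, σ' t i j - σ' t (i - 1) j = c' • e3 (-(sin (ψt t i))) (cos (ψt t i)) 0)) := by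
  obtain ⟨profile, trajectory⟩ := stmt_8_general
    (fun i hi => (cos_pos_of_mem_Ioo (hθr i hi)).ne') hC hF hF' (fun β hβ => (hlam β hβ).2)
    ⟨htC, htη, htθ, htz⟩ (hCt t) (hηt t) (hθt t) (hφt t) (hψt t) (hzt t) (hz't t) (hσ t) (hσ' t)
  exact ⟨fun i _ => profile i,
    fun i hi j _ => ⟨⟨_, (trajectory i hi j).1⟩, ⟨_, (trajectory i hi j).2⟩⟩⟩
end

section
/- Let U, V ⊆ ℝ be open intervals, γ : U → ℝ² and ξ : U → ℝ² smooth, f, z : V → ℝ smooth, and λ : U → ℝ such that: γ'(u) ≠ 0 for all u; ξ'(u) = λ(u)·γ'(u) for all u; ξ(u) and γ'(u) are linearly independent for all u; 1 + f(v)·λ(u) ≠ 0 for all (u,v); and (f'(v), z'(v)) ≠ (0,0) for all v. Define σ : U × V → ℝ³ by σ(u,v) = (γ(u) + f(v)·ξ(u), z(v)). Then for every (u,v): (i) the partial derivatives σ_u(u,v) = (γ'(u) + f(v)ξ'(u), 0) and σ_v(u,v) = (f'(v)ξ(u), z'(v)) are linearly independent, so σ is a regular parametrized surface; (ii) the mixed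 partial derivative σ_{uv}(u,v) = (f'(v)ξ'(u), 0) is a scalar multiple of σ_u(u,v); in particular σ_{uv}(u,v) ∈ span{σ_u(u,v), σ_v(u,v)}, i.e. the coordinate net of σ is conjugate. -/
open Real Set

/-- The vector of `ℝ³` with ground-view component `w ∈ ℝ²` and height `r`. -/
noncomputable def emb (w : EuclideanSpace ℝ (Fin 2)) (r : ℝ) : EuclideanSpace ℝ (Fin 3) :=
  !₂[w 0, w 1, r]

/-!
Since `ξ' = λγ'`, both `σ_u = ((1 + fλ)γ', 0)` and `σ_{uv} = (f'λγ', 0)` are horizontal and parallel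
to `γ'`; as `1 + fλ ≠ 0`, the second is a multiple of the first. In a vanishing combination
`a σ_u + b σ_v`, independence of `ξ` and `γ'` gives `a (1 + fλ) = 0` and `b f' = 0`, and the height
gives `b z' = 0`; hence `a = b = 0`.
-/

section LinearAlgebra

theorem linearIndependent_pair_prodMk_smul {R E G : Type*} [Ring R] [NoZeroDivisors R]
    [AddCommGroup E] [Module R E] [AddCommGroup G] [Module R G] [Module.IsTorsionFree R G]
    {x y : E} {a b : R} {r : G} (hxy : LinearIndependent R ![x, y])
    (ha : a ≠ 0) (hbr : ¬(b = 0 ∧ r = 0)) :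
    LinearIndependent R ![((a • y, 0) : E × G), (b • x, r)] := by
  refine LinearIndependent.pair_iff.mpr fun s t hst ↦ ?_
  obtain ⟨hE, hG⟩ : s • a • y + t • b • x = 0 ∧ t • r = 0 := by simpa using hst
  obtain ⟨htb, hsa⟩ : t * b = 0 ∧ s * a = 0 :=
    hxy.eq_zero_of_pair (by rwa [mul_smul, mul_smul, add_comm])
  have hs : s = 0 := (mul_eq_zero.mp hsa).resolve_right ha
  have ht : t = 0 := by
    by_contra ht
    exact hbr ⟨(mul_eq_zero.mp htb).resolve_left ht, (smul_eq_zero.mp hG).resolve_left ht⟩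
  exact ⟨hs, ht⟩

theorem add_smul_smul_eq_one_add_mul_smul {R E : Type*} [Semiring R] [AddCommMonoid E] [Module R E]
    (a b : R) (x : E) : x + a • b • x = (1 + a * b) • x := by
  rw [add_smul, one_smul, mul_smul]

theorem smul_smul_eq_div_smul_add_smul_smul {K E : Type*} [DivisionRing K] [AddCommGroup E]
    [Module K E] {a b : K} (hab : 1 + a * b ≠ 0) (c : K) (x : E) :
    c • b • x = (c * b / (1 + a * b)) • (x + a • b • x) := by
  rw [add_smul_smul_eq_one_add_mul_smul, smul_smul, smul_smul, div_mul_cancel₀ _ hab]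

theorem linearIndependent_map_pair_add_smul_smul {R E G F : Type*} [Ring R] [NoZeroDivisors R]
    [AddCommGroup E] [Module R E] [AddCommGroup G] [Module R G] [Module.IsTorsionFree R G]
    [AddCommGroup F] [Module R F] {L : E × G →ₗ[R] F} (hL : Function.Injective L)
    {x y : E} {a b c : R} {r : G} (hxy : LinearIndependent R ![x, y])
    (hab : 1 + a * b ≠ 0) (hcr : ¬(c = 0 ∧ r = 0)) :
    LinearIndependent R ![L (y + a • b • y, 0), L (c • x, r)] := by
  have hpair := (linearIndependent_pair_prodMk_smul hxy hab hcr).map' L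
    (LinearMap.ker_eq_bot.mpr hL)
  rw [add_smul_smul_eq_one_add_mul_smul]
  rwa [← FinVec.map_eq] at hpair

end LinearAlgebra

section TSurface

variable {𝕜 E G F : Type*} [NontriviallyNormedField 𝕜]
  [NormedAddCommGroup E] [NormedSpace 𝕜 E] [NormedAddCommGroup G] [NormedSpace 𝕜 G]
  [NormedAddCommGroup F] [NormedSpace 𝕜 F]

/-- The T-surface `σ(u, v) = (γ(u) + f(v)ξ(u), z(v))` with ground view in `E` and height in `G`.
The parameter `L` places `E × G` in the ambient space `F`. -/
def tSurface (L : E × G →L[𝕜] F) (γ ξ : 𝕜 → E) (f : 𝕜 → 𝕜) (z : 𝕜 → G) (u v : 𝕜) : F :=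
  L (γ u + f v • ξ u, z v)

variable {γ ξ : 𝕜 → E} {γ' ξ' : E} {f : 𝕜 → 𝕜} {f' lam : 𝕜} {z : 𝕜 → G} {z' : G} {u v : 𝕜}

theorem hasDerivAt_clm_prodMk_const (L : E × G →L[𝕜] F) {w : 𝕜 → E} {w' : E}
    (hw : HasDerivAt w w' u) (r : G) : HasDerivAt (fun s ↦ L (w s, r)) (L (w', 0)) u :=
  L.hasFDerivAt.comp_hasDerivAt u (hw.prodMk (hasDerivAt_const u r))

theorem hasDerivAt_tSurface_left (L : E × G →L[𝕜] F) (f : 𝕜 → 𝕜) (z : 𝕜 → G) (v : 𝕜)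
    (hγ : HasDerivAt γ γ' u) (hξ : HasDerivAt ξ ξ' u) :
    HasDerivAt (fun s ↦ tSurface L γ ξ f z s v) (L (γ' + f v • ξ', 0)) u :=
  hasDerivAt_clm_prodMk_const L (hγ.add (hξ.const_smul (f v))) (z v)

theorem hasDerivAt_tSurface_right (L : E × G →L[𝕜] F) (γ ξ : 𝕜 → E) (u : 𝕜)
    (hf : HasDerivAt f f' v) (hz : HasDerivAt z z' v) :
    HasDerivAt (fun t ↦ tSurface L γ ξ f z u t) (L (f' • ξ u, z')) v :=
  L.hasFDerivAt.comp_hasDerivAt v (((hf.smul_const (ξ u)).const_add (γ u)).prodMk hz)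

theorem stmt_9_general {L : E × G →L[𝕜] F} (hL : Function.Injective L)
    (hγ : HasDerivAt γ γ' u) (hξ : HasDerivAt ξ ξ' u)
    (hf : HasDerivAt f f' v) (hz : HasDerivAt z z' v)
    (hlam : ξ' = lam • γ') (hind : LinearIndependent 𝕜 ![ξ u, γ'])
    (hreg : 1 + f v * lam ≠ 0) (hfz : ¬(f' = 0 ∧ z' = 0)) :
    HasDerivAt (fun s ↦ tSurface L γ ξ f z s v) (L (γ' + f v • ξ', 0)) u ∧
    HasDerivAt (fun t ↦ tSurface L γ ξ f z u t) (L (f' • ξ u, z')) v ∧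
    LinearIndependent 𝕜 ![L (γ' + f v • ξ', 0), L (f' • ξ u, z')] ∧
    HasDerivAt (fun s ↦ L (f' • ξ s, z')) (L (f' • ξ', 0)) u ∧
    (∃ c : 𝕜, L (f' • ξ', 0) = c • L (γ' + f v • ξ', 0)) ∧
    L (f' • ξ', 0) ∈ Submodule.span 𝕜 {L (γ' + f v • ξ', 0), L (f' • ξ u, z')} := by
  subst hlam
  have hmixed : L (f' • lam • γ', 0) =
      (f' * lam / (1 + f v * lam)) • L (γ' + f v • lam • γ', 0) := by
    rw [← map_smul, Prod.smul_mk, smul_zero, ← smul_smul_eq_div_smul_add_smul_smul hreg]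
  have hspan : L (f' • lam • γ', 0) ∈
      Submodule.span 𝕜 {L (γ' + f v • lam • γ', 0), L (f' • ξ u, z')} := by
    rw [hmixed]
    exact Submodule.smul_mem _ _ (Submodule.mem_span_of_mem (mem_insert _ _))
  exact ⟨hasDerivAt_tSurface_left L f z v hγ hξ, hasDerivAt_tSurface_right L γ ξ u hf hz,
    linearIndependent_map_pair_add_smul_smul (L := L.toLinearMap) hL hind hreg hfz,
    hasDerivAt_clm_prodMk_const L (hξ.const_smul f') z', ⟨_, hmixed⟩, hspan⟩

end TSurface

/-- The identification `ℝ² × ℝ → ℝ³` given by `emb`, as a continuous linear map, so that the surface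
of `stmt_9` is a `tSurface`. -/
noncomputable def embCLM : EuclideanSpace ℝ (Fin 2) × ℝ →L[ℝ] EuclideanSpace ℝ (Fin 3) :=
  LinearMap.toContinuousLinearMap
    { toFun := fun p ↦ emb p.1 p.2
      map_add' := fun p q ↦ by ext i; fin_cases i <;> simp [emb]
      map_smul' := fun c p ↦ by ext i; fin_cases i <;> simp [emb] }

theorem embCLM_injective : Function.Injective embCLM := by
  rintro ⟨w, r⟩ ⟨w', r'⟩ h
  have hcoord (i : Fin 3) : emb w r i = emb w' r' i := congrArg (fun x ↦ x i) h
  have hw : w = w' := by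
    ext i
    fin_cases i
    exacts [hcoord 0, hcoord 1]
  exact Prod.ext hw (hcoord 2)

/-- **Theorem 4.2 (converse direction).** Every map
`σ(u,v) = (γ(u) + f(v)ξ(u), z(v))` with the listed conditions is a regular parametrized
surface (σ_u, σ_v linearly independent) whose coordinate net is conjugate
(σ_{uv} is a scalar multiple of σ_u, in particular σ_{uv} ∈ span{σ_u, σ_v}). -/
theorem stmt_9 (U V : Set ℝ) (hU : IsOpen U) (hV : IsOpen V)
    (hUc : U.OrdConnected) (hVc : V.OrdConnected)
    (γ ξ γ' ξ' : ℝ → EuclideanSpace ℝ (Fin 2))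
    (f z f' z' : ℝ → ℝ) (lam : ℝ → ℝ)
    (hγ : ∀ u ∈ U, HasDerivAt γ (γ' u) u)
    (hξ : ∀ u ∈ U, HasDerivAt ξ (ξ' u) u)
    (hf : ∀ v ∈ V, HasDerivAt f (f' v) v)
    (hz : ∀ v ∈ V, HasDerivAt z (z' v) v)
    (hγ'ne : ∀ u ∈ U, γ' u ≠ 0)
    (hlam : ∀ u ∈ U, ξ' u = lam u • γ' u)
    (hind : ∀ u ∈ U, LinearIndependent ℝ ![ξ u, γ' u])
    (hreg : ∀ u ∈ U, ∀ v ∈ V, 1 + f v * lam u ≠ 0)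
    (hfz : ∀ v ∈ V, ¬(f' v = 0 ∧ z' v = 0))
    (σ : ℝ → ℝ → EuclideanSpace ℝ (Fin 3))
    (hσ : ∀ u v, σ u v = emb (γ u + f v • ξ u) (z v)) :
    ∀ u ∈ U, ∀ v ∈ V,
      -- (i) σ_u and σ_v exist, are as claimed, and are linearly independent
      HasDerivAt (fun u' => σ u' v) (emb (γ' u + f v • ξ' u) 0) u ∧
      HasDerivAt (fun v' => σ u v') (emb (f' v • ξ u) (z' v)) v ∧
      LinearIndependent ℝ ![emb (γ' u + f v • ξ' u) 0, emb (f' v • ξ u) (z' v)] ∧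
      -- (ii) σ_{uv} = ∂/∂u (σ_v) exists, is as claimed, is a scalar multiple of σ_u,
      --      and lies in span{σ_u, σ_v}
      HasDerivAt (fun u' => emb (f' v • ξ u') (z' v)) (emb (f' v • ξ' u) 0) u ∧
      (∃ c : ℝ, emb (f' v • ξ' u) 0 = c • emb (γ' u + f v • ξ' u) 0) ∧
      emb (f' v • ξ' u) 0 ∈
        Submodule.span ℝ {emb (γ' u + f v • ξ' u) 0, emb (f' v • ξ u) (z' v)} := by
  obtain rfl : σ = tSurface embCLM γ ξ f z := funext₂ hσ
  exact fun u hu v hv ↦ stmt_9_general embCLM_injective (hγ u hu) (hξ u hu) (hf v hv) (hz v hv)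
    (hlam u hu) (hind u hu) (hreg u hu v hv) (hfz v hv)
end

section
/- Let c, φ, g, ψ : U → ℝ be differentiable on an interval U with c(u) ≠ 0 and g(u) ≠ 0 for all u. Define ξ(u) = c(u)·(cos φ(u), sin φ(u)), and let γ : U → ℝ² be differentiable with γ'(u) = g(u)·(−sin ψ(u), cos ψ(u)). Then for each u ∈ U, the vectors ξ'(u) and γ'(u) are linearly dependent if and only if c'(u)·cos(φ(u) − ψ(u)) = c(u)·φ'(u)·sin(φ(u) − ψ(u)). -/
open Real Set

/-- A vector in the Euclidean plane `ℝ²` given by its two coordinates. -/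
noncomputable def e2 (x y : ℝ) : EuclideanSpace ℝ (Fin 2) := !₂[x, y]

/-!
In the frame turned by `θ`, with radial vector `(cos θ, sin θ)` and angular vector
`(-sin θ, cos θ)`, the derivative of `ξ` has components `c'` and `c φ'` for `θ = φ`, while `γ'` is
the angular vector for `θ = ψ`, scaled by `g ≠ 0`. So `ξ'` is parallel to `γ'` exactly when its
radial component for `θ = ψ` vanishes, and the rotation by `φ - ψ` gives this component as
`c' cos (φ - ψ) - c φ' sin (φ - ψ)`.
-/

theorem smul_e2 (t x y : ℝ) : t • e2 x y = e2 (t * x) (t * y) := by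
  ext i
  fin_cases i <;> rfl

theorem e2_add_e2 (x y x' y' : ℝ) : e2 x y + e2 x' y' = e2 (x + x') (y + y') := by
  ext i
  fin_cases i <;> rfl

theorem linearIndependent_pair_iff_det_ne_zero {K : Type*} [Field K] (a b x y : K) :
    LinearIndependent K ![![a, b], ![x, y]] ↔ a * y - b * x ≠ 0 := by
  rw [← Matrix.det_fin_two_of, ← isUnit_iff_ne_zero, ← Matrix.isUnit_iff_isUnit_det]
  exact Matrix.linearIndependent_rows_iff_isUnit

theorem linearIndependent_e2_pair_iff (a b x y : ℝ) :
    LinearIndependent ℝ ![e2 a b, e2 x y] ↔ a * y - b * x ≠ 0 := by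
  have ofLp_pair : WithLp.linearEquiv 2 ℝ (Fin 2 → ℝ) ∘ ![e2 a b, e2 x y] =
      ![![a, b], ![x, y]] := by
    ext i j
    fin_cases i <;> rfl
  rw [← linearIndependent_pair_iff_det_ne_zero, ← ofLp_pair]
  exact ((WithLp.linearEquiv 2 ℝ (Fin 2 → ℝ)).toLinearMap.linearIndependent_iff
    (LinearEquiv.ker _)).symm

theorem not_linearIndependent_radial_add_angular_iff (a b φ ψ : ℝ) {g : ℝ} (hg : g ≠ 0) :
    ¬ LinearIndependent ℝ
        ![a • e2 (cos φ) (sin φ) + b • e2 (-sin φ) (cos φ), g • e2 (-sin ψ) (cos ψ)] ↔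
      a * cos (φ - ψ) = b * sin (φ - ψ) := by
  have det_eq : (a * cos φ + b * -sin φ) * (g * cos ψ) - (a * sin φ + b * cos φ) * (g * -sin ψ) =
      g * (a * cos (φ - ψ) - b * sin (φ - ψ)) := by
    rw [cos_sub, sin_sub]
    ring
  simp only [smul_e2, e2_add_e2]
  rw [linearIndependent_e2_pair_iff, not_ne_iff, det_eq, mul_eq_zero_iff_left hg, sub_eq_zero]

section Deriv

variable {f g : ℝ → ℝ} {f' g' : ℝ} {s : Set ℝ} {t : ℝ}

theorem hasDerivWithinAt_e2 (hf : HasDerivWithinAt f f' s t) (hg : HasDerivWithinAt g g' s t) :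
    HasDerivWithinAt (fun x ↦ e2 (f x) (g x)) (e2 f' g') s t := by
  have e2_eq (x y : ℝ) : e2 x y = x • e2 1 0 + y • e2 0 1 := by
    simp only [smul_e2, e2_add_e2, mul_one, mul_zero, add_zero, zero_add]
  simp only [e2_eq (f _), e2_eq f']
  exact (hf.smul_const _).add (hg.smul_const _)

theorem hasDerivWithinAt_e2_cos_sin (hf : HasDerivWithinAt f f' s t) :
    HasDerivWithinAt (fun x ↦ e2 (cos (f x)) (sin (f x)))
      (f' • e2 (-sin (f t)) (cos (f t))) s t := by
  rw [smul_e2, mul_comm f', mul_comm f']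
  exact hasDerivWithinAt_e2 hf.cos hf.sin

theorem hasDerivWithinAt_polar (hf : HasDerivWithinAt f f' s t)
    (hg : HasDerivWithinAt g g' s t) :
    HasDerivWithinAt (fun x ↦ f x • e2 (cos (g x)) (sin (g x)))
      (f' • e2 (cos (g t)) (sin (g t)) + (f t * g') • e2 (-sin (g t)) (cos (g t))) s t := by
  rw [add_comm, mul_smul]
  exact hf.smul (hasDerivWithinAt_e2_cos_sin hg)

end Deriv

theorem stmt_11_general {U : Set ℝ} {u : ℝ} {c φ : ℝ → ℝ} {c' φ' g : ℝ}
    (hc : HasDerivWithinAt c c' U u) (hφ : HasDerivWithinAt φ φ' U u) (hg : g ≠ 0) (ψ : ℝ) :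
    HasDerivWithinAt (fun t ↦ c t • e2 (cos (φ t)) (sin (φ t)))
        (c' • e2 (cos (φ u)) (sin (φ u)) + (c u * φ') • e2 (-sin (φ u)) (cos (φ u))) U u ∧
      (¬ LinearIndependent ℝ
          ![c' • e2 (cos (φ u)) (sin (φ u)) + (c u * φ') • e2 (-sin (φ u)) (cos (φ u)),
            g • e2 (-sin ψ) (cos ψ)] ↔
        c' * cos (φ u - ψ) = c u * φ' * sin (φ u - ψ)) :=
  ⟨hasDerivWithinAt_polar hc hφ, not_linearIndependent_radial_add_angular_iff _ _ _ _ hg⟩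

/-- **Lemma 4.3.** For `ξ(u) = c(u)(cos φ(u), sin φ(u))` and a curve `γ` with
`γ'(u) = g(u)(−sin ψ(u), cos ψ(u))` (with `c, g` nowhere zero), the vectors `ξ'(u)` and
`γ'(u)` are linearly dependent iff `c'(u) cos(φ(u) − ψ(u)) = c(u) φ'(u) sin(φ(u) − ψ(u))`. -/
theorem stmt_11 (U : Set ℝ) (hUc : U.OrdConnected)
    (c φ g ψ c' φ' g' ψ' : ℝ → ℝ)
    (hc : ∀ u ∈ U, HasDerivWithinAt c (c' u) U u)
    (hφ : ∀ u ∈ U, HasDerivWithinAt φ (φ' u) U u)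
    (hgd : ∀ u ∈ U, HasDerivWithinAt g (g' u) U u)
    (hψd : ∀ u ∈ U, HasDerivWithinAt ψ (ψ' u) U u)
    (hcne : ∀ u ∈ U, c u ≠ 0) (hgne : ∀ u ∈ U, g u ≠ 0)
    (ξ : ℝ → EuclideanSpace ℝ (Fin 2))
    (hξ : ∀ u, ξ u = c u • e2 (cos (φ u)) (sin (φ u)))
    (γ : ℝ → EuclideanSpace ℝ (Fin 2))
    (hγ : ∀ u ∈ U, HasDerivWithinAt γ (g u • e2 (-(sin (ψ u))) (cos (ψ u))) U u) :
    ∀ u ∈ U,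
      HasDerivWithinAt ξ
        (c' u • e2 (cos (φ u)) (sin (φ u)) + (c u * φ' u) • e2 (-(sin (φ u))) (cos (φ u)))
        U u ∧
      (¬ LinearIndependent ℝ
          ![c' u • e2 (cos (φ u)) (sin (φ u)) + (c u * φ' u) • e2 (-(sin (φ u))) (cos (φ u)),
            g u • e2 (-(sin (ψ u))) (cos (ψ u))] ↔
        c' u * cos (φ u - ψ u) = c u * φ' u * sin (φ u - ψ u)) := by
  obtain rfl : ξ = fun u ↦ c u • e2 (cos (φ u)) (sin (φ u)) := funext hξ
  exact fun u hu ↦ stmt_11_general (hc u hu) (hφ u hu) (hgne u hu) (ψ u)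
end

section
/- Let x, y : [0,a] → ℝ and f, z : [0,b] → ℝ be continuously differentiable with x(0) = f(0) = y(0) = z(0) = 0, y'(u) > 0 for all u, and z'(v) > 0 for all v. Fix t ∈ ℝ such that y'(u)² + (1 − e^{2t})·x'(u)² ≥ 0 for all u and z'(v)² + (1 − e^{−2t})·f'(v)² ≥ 0 for all v. Define σᵗ : [0,a]×[0,b] → ℝ³ by σᵗ(u,v) = ( e^{t}x(u) + e^{−t}f(v), ∫₀ᵘ √( y'(w)² + (1 − e^{2t}) x'(w)² ) dw, ∫₀ᵛ √( z'(w)² + (1 − e^{−2t}) f'(w)² ) dw ). Then for all (u,v): ‖σᵗ_u(u,v)‖² = x'(u)² + y'(u)², ⟪σᵗ_u(u,v), σᵗ_v(u,v)⟫ = x'(u)·f'(v), and ‖σᵗ_v(u,v)‖² = f'(v)² + z'(v)². In particular the first fundamental form of σᵗ coincides with that of σ⁰(u,v) = (x(u)+f(v), y(u), z(v)), so σᵗ is an isometric deformation of the translational T-surface σ⁰. -/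
open Real Set

/-!
In a translational T-surface, `E` and `G` are the squared speeds of the two planar profile curves,
and `F` is the product of the speeds in the one direction their planes share. Scaling these shared
components by reciprocal factors `c` and `d` leaves `F` unchanged, and the remaining coordinate of
each profile can be re-integrated so that its speed, hence `E` or `G`, is unchanged too.
-/

/-- The surface `σ`, on a parameter domain `s × r`, has at `(u, v)` the first fundamental form with
coefficients `E`, `F`, `G`. The partial derivatives are taken within `s` and `r`, so that they are
one-sided at the boundary of a rectangle. -/
def HasFirstFundamentalFormWithinAt {V : Type*} [NormedAddCommGroup V] [InnerProductSpace ℝ V]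
    (σ : ℝ → ℝ → V) (s r : Set ℝ) (u v E F G : ℝ) : Prop :=
  ∃ σu σv : V,
    HasDerivWithinAt (fun u' => σ u' v) σu s u ∧
    HasDerivWithinAt (fun v' => σ u v') σv r v ∧
    ‖σu‖ ^ 2 = E ∧ inner ℝ σu σv = F ∧ ‖σv‖ ^ 2 = G

/-- The translational T-surface with profile curves `(x, y)` and `(f, z)`, placed in the
`xy`-plane and the `xz`-plane respectively. -/
noncomputable def translationalTSurface (x y f z : ℝ → ℝ) (u v : ℝ) : EuclideanSpace ℝ (Fin 3) :=
  e3 (x u + f v) (y u) (z v)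

/-- The height function, normalized to vanish at `u₀`, that gives a planar curve with velocity
`(x', y')` its original speed back after the first coordinate has been scaled by `c`. Where the
radicand is negative no such height exists, and `√` contributes `0`. -/
noncomputable def speedPreservingHeight (c : ℝ) (x' y' : ℝ → ℝ) (u₀ u : ℝ) : ℝ :=
  ∫ w in u₀..u, √(y' w ^ 2 + (1 - c ^ 2) * x' w ^ 2)

theorem hasDerivWithinAt_integral_of_continuousOn_Icc {V : Type*} [NormedAddCommGroup V]
    [NormedSpace ℝ V] [CompleteSpace V] {g : ℝ → V} {a b c u : ℝ} (hg : ContinuousOn g (Icc a b))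
    (hc : c ∈ Icc a b) (hu : u ∈ Icc a b) :
    HasDerivWithinAt (fun s => ∫ w in c..s, g w) (g u) (Icc a b) u :=
  -- The one-sided fundamental theorem of calculus finds `u ∈ Icc a b` by instance search.
  haveI : Fact (u ∈ Icc a b) := ⟨hu⟩
  intervalIntegral.integral_hasDerivWithinAt_right
    (hg.mono (uIcc_subset_Icc hc hu)).intervalIntegrable
    (hg.stronglyMeasurableAtFilter_nhdsWithin measurableSet_Icc u) (hg u hu)

theorem inner_e3 (x y z x' y' z' : ℝ) :
    inner ℝ (e3 x y z) (e3 x' y' z') = x * x' + y * y' + z * z' := by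
  simp [e3, PiLp.inner_apply, Fin.sum_univ_three, mul_comm]

theorem norm_e3_sq (x y z : ℝ) : ‖e3 x y z‖ ^ 2 = x ^ 2 + y ^ 2 + z ^ 2 := by
  rw [← real_inner_self_eq_norm_sq, inner_e3]
  ring

theorem hasDerivWithinAt_e3 {x y z : ℝ → ℝ} {x' y' z' u : ℝ} {s : Set ℝ}
    (hx : HasDerivWithinAt x x' s u) (hy : HasDerivWithinAt y y' s u)
    (hz : HasDerivWithinAt z z' s u) :
    HasDerivWithinAt (fun w => e3 (x w) (y w) (z w)) (e3 x' y' z') s u := by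
  have h_pi : HasDerivWithinAt (fun w => ![x w, y w, z w]) ![x', y', z'] s u :=
    hasDerivWithinAt_pi.2 fun i => by fin_cases i <;> assumption
  exact (PiLp.hasFDerivAt_toLp 2 _).comp_hasDerivWithinAt u h_pi

theorem hasFirstFundamentalFormWithinAt_translationalTSurface {x y f z : ℝ → ℝ}
    {x' y' f' z' u v : ℝ} {s r : Set ℝ}
    (hx : HasDerivWithinAt x x' s u) (hy : HasDerivWithinAt y y' s u)
    (hf : HasDerivWithinAt f f' r v) (hz : HasDerivWithinAt z z' r v) :
    HasFirstFundamentalFormWithinAt (translationalTSurface x y f z) s r u v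
      (x' ^ 2 + y' ^ 2) (x' * f') (f' ^ 2 + z' ^ 2) := by
  refine ⟨e3 x' y' 0, e3 f' 0 z', hasDerivWithinAt_e3 (hx.add_const _) hy
    (hasDerivWithinAt_const _ _ _), hasDerivWithinAt_e3 (hf.const_add _)
    (hasDerivWithinAt_const _ _ _) hz, ?_, ?_, ?_⟩
  · simp [norm_e3_sq]
  · simp [inner_e3]
  · simp [norm_e3_sq]

theorem hasDerivWithinAt_speedPreservingHeight {x' y' : ℝ → ℝ} {a b u₀ u : ℝ} (c : ℝ)
    (hx' : ContinuousOn x' (Icc a b)) (hy' : ContinuousOn y' (Icc a b))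
    (hu₀ : u₀ ∈ Icc a b) (hu : u ∈ Icc a b) :
    HasDerivWithinAt (speedPreservingHeight c x' y' u₀)
      (√(y' u ^ 2 + (1 - c ^ 2) * x' u ^ 2)) (Icc a b) u :=
  hasDerivWithinAt_integral_of_continuousOn_Icc
    (g := fun w => √(y' w ^ 2 + (1 - c ^ 2) * x' w ^ 2)) (by fun_prop) hu₀ hu

theorem scaled_sq_add_sqrt_sq {c p q : ℝ} (h : 0 ≤ q ^ 2 + (1 - c ^ 2) * p ^ 2) :
    (c * p) ^ 2 + √(q ^ 2 + (1 - c ^ 2) * p ^ 2) ^ 2 = p ^ 2 + q ^ 2 := by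
  rw [sq_sqrt h]
  ring

theorem stmt_13_general {a₀ a b₀ b c d : ℝ} {x y x' y' f z f' z' : ℝ → ℝ}
    (hx : ∀ u ∈ Icc a₀ a, HasDerivWithinAt x (x' u) (Icc a₀ a) u)
    (hy : ∀ u ∈ Icc a₀ a, HasDerivWithinAt y (y' u) (Icc a₀ a) u)
    (hf : ∀ v ∈ Icc b₀ b, HasDerivWithinAt f (f' v) (Icc b₀ b) v)
    (hz : ∀ v ∈ Icc b₀ b, HasDerivWithinAt z (z' v) (Icc b₀ b) v)
    (hx' : ContinuousOn x' (Icc a₀ a)) (hy' : ContinuousOn y' (Icc a₀ a))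
    (hf' : ContinuousOn f' (Icc b₀ b)) (hz' : ContinuousOn z' (Icc b₀ b))
    (hcd : c * d = 1)
    (hc : ∀ u ∈ Icc a₀ a, 0 ≤ y' u ^ 2 + (1 - c ^ 2) * x' u ^ 2)
    (hd : ∀ v ∈ Icc b₀ b, 0 ≤ z' v ^ 2 + (1 - d ^ 2) * f' v ^ 2) :
    ∀ u ∈ Icc a₀ a, ∀ v ∈ Icc b₀ b,
      HasFirstFundamentalFormWithinAt (translationalTSurface x y f z) (Icc a₀ a) (Icc b₀ b) u v
        (x' u ^ 2 + y' u ^ 2) (x' u * f' v) (f' v ^ 2 + z' v ^ 2) ∧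
      HasFirstFundamentalFormWithinAt
        (translationalTSurface (fun u => c * x u) (speedPreservingHeight c x' y' a₀)
          (fun v => d * f v) (speedPreservingHeight d f' z' b₀)) (Icc a₀ a) (Icc b₀ b) u v
        (x' u ^ 2 + y' u ^ 2) (x' u * f' v) (f' v ^ 2 + z' v ^ 2) := by
  intro u hu v hv
  have ha₀ : a₀ ∈ Icc a₀ a := left_mem_Icc.2 (hu.1.trans hu.2)
  have hb₀ : b₀ ∈ Icc b₀ b := left_mem_Icc.2 (hv.1.trans hv.2)
  have hF : c * x' u * (d * f' v) = x' u * f' v := by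
    rw [mul_mul_mul_comm, hcd, one_mul]
  refine ⟨hasFirstFundamentalFormWithinAt_translationalTSurface (hx u hu) (hy u hu) (hf v hv)
    (hz v hv), ?_⟩
  rw [← scaled_sq_add_sqrt_sq (hc u hu), ← hF, ← scaled_sq_add_sqrt_sq (hd v hv)]
  exact hasFirstFundamentalFormWithinAt_translationalTSurface
    ((hx u hu).const_mul c) (hasDerivWithinAt_speedPreservingHeight c hx' hy' ha₀ hu)
    ((hf v hv).const_mul d) (hasDerivWithinAt_speedPreservingHeight d hf' hz' hb₀ hv)

/-- **Theorem 5.2.** The explicit isometric deformation of a translational T-surface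
`σ⁰(u,v) = (x(u)+f(v), y(u), z(v))`: the deformed surface `σᵗ` has first fundamental form
`E = x'² + y'²`, `F = x' f'`, `G = f'² + z'²`, i.e. the same as `σ⁰`. -/
theorem stmt_13 (a b : ℝ)
    (x y x' y' f z f' z' : ℝ → ℝ)
    (hx : ∀ u ∈ Icc 0 a, HasDerivWithinAt x (x' u) (Icc 0 a) u)
    (hy : ∀ u ∈ Icc 0 a, HasDerivWithinAt y (y' u) (Icc 0 a) u)
    (hf : ∀ v ∈ Icc 0 b, HasDerivWithinAt f (f' v) (Icc 0 b) v)
    (hz : ∀ v ∈ Icc 0 b, HasDerivWithinAt z (z' v) (Icc 0 b) v)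
    (hx' : ContinuousOn x' (Icc 0 a)) (hy' : ContinuousOn y' (Icc 0 a))
    (hf' : ContinuousOn f' (Icc 0 b)) (hz' : ContinuousOn z' (Icc 0 b))
    (hx0 : x 0 = 0) (hf0 : f 0 = 0) (hy0 : y 0 = 0) (hz0 : z 0 = 0)
    (hy'pos : ∀ u ∈ Icc 0 a, 0 < y' u) (hz'pos : ∀ v ∈ Icc 0 b, 0 < z' v)
    (t : ℝ)
    (ht1 : ∀ u ∈ Icc 0 a, 0 ≤ y' u ^ 2 + (1 - Real.exp (2 * t)) * x' u ^ 2)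
    (ht2 : ∀ v ∈ Icc 0 b, 0 ≤ z' v ^ 2 + (1 - Real.exp (-2 * t)) * f' v ^ 2)
    (σ : ℝ → ℝ → EuclideanSpace ℝ (Fin 3))
    (hσ : ∀ u v, σ u v =
      e3 (Real.exp t * x u + Real.exp (-t) * f v)
         (∫ w in (0:ℝ)..u, Real.sqrt (y' w ^ 2 + (1 - Real.exp (2 * t)) * x' w ^ 2))
         (∫ w in (0:ℝ)..v, Real.sqrt (z' w ^ 2 + (1 - Real.exp (-2 * t)) * f' w ^ 2))) :
    ∀ u ∈ Icc 0 a, ∀ v ∈ Icc 0 b,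
      ∃ su sv : EuclideanSpace ℝ (Fin 3),
        HasDerivWithinAt (fun u' => σ u' v) su (Icc 0 a) u ∧
        HasDerivWithinAt (fun v' => σ u v') sv (Icc 0 b) v ∧
        ‖su‖ ^ 2 = x' u ^ 2 + y' u ^ 2 ∧
        (inner ℝ su sv : ℝ) = x' u * f' v ∧
        ‖sv‖ ^ 2 = f' v ^ 2 + z' v ^ 2 := by
  have exp_two_mul (s : ℝ) : Real.exp (2 * s) = Real.exp s ^ 2 := mod_cast Real.exp_nat_mul s 2
  have exp_mul_exp_neg : Real.exp t * Real.exp (-t) = 1 := by rw [← Real.exp_add]; simp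
  obtain rfl : σ = _ := funext₂ hσ
  simp only [neg_mul_comm, exp_two_mul] at ht1 ht2 ⊢
  exact fun u hu v hv =>
    (stmt_13_general hx hy hf hz hx' hy' hf' hz' exp_mul_exp_neg ht1 ht2 u hu v hv).2
end
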